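/- arXiv:1703.03181 — 3 statements merged into one kernel-verified Lean document; each statement's English description precedes it below -/
import Mathlib

section
/- (Edwards' duality theorem.) Let φ : X → ℝ be a lower semicontinuous function and let z ∈ X. Then sup{ ψ(z) : ψ ∈ S, ψ ≤ φ on X } = inf{ ∫_X φ dμ : μ ∈ J_z(S) }. -/
/-!
Write `q` for the left-hand side, a real number because a lower semicontinuous function on a
nonempty compact space is bounded below. The inequality `≤` is integration of `ψ ≤ φ` against a
Jensen measure. For `≥`, a single Jensen measure `μ` with `∫ φ dμ ≤ q` is produced.

Consider in `C(X, ℝ)` the convex cone of those `h` for which some `ψ ∈ S` and `t ≥ 0` satisfy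
`ψ - ψ z ≤ h + t (φ - q)`. The definition of `q` says exactly that a constant lying in this cone
is nonnegative, so the M. Riesz extension theorem extends the functional `c ↦ c` on constants to a
linear functional `Λ` that is nonnegative on the cone (`exists_functional`). The cone contains
* every `h ≥ 0`, so `Λ` is a probability measure `μ` by Riesz–Markov–Kakutani
  (`exists_measure_of_positive`);
* every `ψ - ψ z` with `ψ ∈ S`, so `μ` is a Jensen measure with barycenter `z`;
* every `q - f` with `f` continuous and `f ≤ φ`, so `∫ f dμ ≤ q` for such `f`.

Since `φ` is the increasing limit of continuous functions (`exists_continuous_approx`), monotone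
convergence gives `∫ φ dμ ≤ q` (`integral_le_of_continuous_le`). Using the lower semicontinuous
`φ` itself in the cone makes a weak-star compactness argument on Jensen measures unnecessary.
-/

open MeasureTheory Topology Filter
open scoped ENNReal

/-- The nonnegative part of an extended real number, as an element of `ℝ≥0∞`. -/
noncomputable def erealToENNReal (a : EReal) : ℝ≥0∞ :=
  if a = ⊤ then ⊤ else ENNReal.ofReal a.toReal

/-- The (upper) integral of a function with values in `[-∞, ∞]`, defined as the
difference of the lower integrals of its positive and negative parts. -/
noncomputable def erealIntegral {α : Type*} [MeasurableSpace α]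
    (μ : Measure α) (u : α → EReal) : EReal :=
  ((∫⁻ x, erealToENNReal (u x) ∂μ : ℝ≥0∞) : EReal) -
    ((∫⁻ x, erealToENNReal (-(u x)) ∂μ : ℝ≥0∞) : EReal)

/-- `μ` is a Jensen measure with barycenter `z` with respect to the family `S` of
(continuous real-valued) functions: a Borel probability measure such that
`u z ≤ ∫ u dμ` for every `u ∈ S`. -/
def IsJensenMeasure {α : Type*} [MeasurableSpace α]
    (S : Set (α → ℝ)) (z : α) (μ : Measure α) : Prop :=
  IsProbabilityMeasure μ ∧ ∀ u ∈ S, u z ≤ ∫ x, u x ∂μ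

/-- A function `u : α → [-∞, ∞)` is `S`-subharmonic if it is upper semicontinuous
and satisfies `u z ≤ ∫ u dμ` for every `z` and every Jensen measure `μ` with
barycenter `z` w.r.t. `S`. -/
def IsSSubharmonic {α : Type*} [TopologicalSpace α] [MeasurableSpace α]
    (S : Set (α → ℝ)) (u : α → EReal) : Prop :=
  UpperSemicontinuous u ∧ (∀ x, u x ≠ ⊤) ∧
    ∀ z : α, ∀ μ : Measure α, IsJensenMeasure S z μ → u z ≤ erealIntegral μ u

/-- A lower semicontinuous function bounded below on a metric space is the pointwise limit of an
increasing sequence of continuous functions, namely its Lipschitz regularizations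
`x ↦ ⨅ y, φ y + k * dist x y`. -/
lemma exists_continuous_approx {α : Type*} [MetricSpace α] [Nonempty α]
    (φ : α → ℝ) (hφ : LowerSemicontinuous φ) (m : ℝ) (hm : ∀ x, m ≤ φ x) :
    ∃ f : ℕ → C(α, ℝ), (∀ k x, m ≤ f k x) ∧ (∀ k x, f k x ≤ φ x) ∧
      (∀ x, Monotone fun k => f k x) ∧ ∀ x, Tendsto (fun k => f k x) atTop (𝓝 (φ x)) := by
  have hlow : ∀ (k : ℕ) (x y : α), m ≤ φ y + k * dist x y := fun k x y =>
    (hm y).trans (le_add_of_nonneg_right (by positivity))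
  have hbdd : ∀ (k : ℕ) (x : α), BddBelow (Set.range fun y => φ y + k * dist x y) := by
    rintro k x
    refine ⟨m, ?_⟩
    rintro _ ⟨y, rfl⟩
    exact hlow k x y
  have hlip : ∀ k : ℕ, LipschitzWith k fun x => ⨅ y, φ y + k * dist x y := by
    intro k
    refine LipschitzWith.of_le_add_mul _ fun x x' => ?_
    rw [← sub_le_iff_le_add]
    refine le_ciInf fun y => ?_
    rw [sub_le_iff_le_add]
    refine (ciInf_le (hbdd k x) y).trans ?_
    have h1 := dist_triangle x x' y
    have h2 : (k : ℝ) * dist x y ≤ k * (dist x x' + dist x' y) := by gcongr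
    simp only [NNReal.coe_natCast]
    linarith
  have hle : ∀ (k : ℕ) (x : α), (⨅ y, φ y + k * dist x y) ≤ φ x := fun k x => by
    simpa using ciInf_le (hbdd k x) x
  refine ⟨fun k => ⟨_, (hlip k).continuous⟩, fun k x => le_ciInf (hlow k x), hle,
    fun x k l hkl => ?_, fun x => ?_⟩
  · refine ciInf_mono (hbdd k x) fun y => ?_
    have : (k : ℝ) ≤ l := by exact_mod_cast hkl
    gcongr
  · refine tendsto_order.2 ⟨fun a ha => ?_, fun a ha => Eventually.of_forall fun k =>
      (hle k x).trans_lt ha⟩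
    obtain ⟨b, hab, hb⟩ := exists_between ha
    obtain ⟨δ, hδ, hball⟩ := Metric.eventually_nhds_iff.1 (hφ x b hb)
    obtain ⟨N, hN⟩ := exists_nat_ge ((b - m) / δ)
    filter_upwards [eventually_ge_atTop N] with k hk
    refine hab.trans_le (le_ciInf fun y => ?_)
    -- Near `x` the values of `φ` exceed `b`; away from `x` the penalty `k * dist x y` does.
    rcases lt_or_ge (dist y x) δ with h | h
    · have h1 : 0 ≤ (k : ℝ) * dist x y := by positivity
      have := hball h
      linarith
    · have h1 : b - m ≤ N * δ := (div_le_iff₀ hδ).1 hN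
      have h2 : (N : ℝ) * δ ≤ k * dist x y := by
        rw [dist_comm x y]
        gcongr
      linarith [hm y]

lemma integral_le_of_continuous_le {α : Type*} [MetricSpace α] [CompactSpace α] [Nonempty α]
    [MeasurableSpace α] [BorelSpace α] (μ : Measure α) [IsProbabilityMeasure μ]
    (φ : α → ℝ) (hφ : LowerSemicontinuous φ) (m : ℝ) (hm : ∀ x, m ≤ φ x) (q : ℝ)
    (hq : ∀ f : C(α, ℝ), (∀ x, f x ≤ φ x) → ∫ x, f x ∂μ ≤ q) :
    Integrable φ μ ∧ ∫ x, φ x ∂μ ≤ q := by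
  obtain ⟨f, hmf, hfφ, hmono, hlim⟩ := exists_continuous_approx φ hφ m hm
  have hfi : ∀ k, Integrable (fun x => f k x) μ := fun k =>
    (f k).continuous.integrable_of_hasCompactSupport (HasCompactSupport.of_compactSpace _)
  have hmq : m ≤ q := by
    simpa using hq (ContinuousMap.const α m) hm
  have hk : ∀ k, ∫⁻ x, ENNReal.ofReal (f k x - m) ∂μ ≤ ENNReal.ofReal (q - m) := fun k => by
    have hfm : Integrable (fun x => f k x - m) μ := (hfi k).sub (integrable_const m)
    rw [← ofReal_integral_eq_lintegral_ofReal hfm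
      (Eventually.of_forall fun x => sub_nonneg.2 (hmf k x))]
    refine ENNReal.ofReal_le_ofReal ?_
    rw [integral_sub (hfi k) (integrable_const m)]
    simpa using hq (f k) (hfφ k)
  have hφm : ∫⁻ x, ENNReal.ofReal (φ x - m) ∂μ ≤ ENNReal.ofReal (q - m) := by
    refine le_of_tendsto' (lintegral_tendsto_of_tendsto_of_monotone
      (fun k => ?_) (Eventually.of_forall fun x k l hkl => ?_)
      (Eventually.of_forall fun x => ?_)) hk
    · exact ((f k).continuous.measurable.sub_const m).ennreal_ofReal.aemeasurable
    · exact ENNReal.ofReal_le_ofReal (sub_le_sub_right (hmono x hkl) m)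
    · exact ENNReal.tendsto_ofReal ((hlim x).sub_const m)
  have hφi : Integrable (fun x => φ x - m) μ := by
    refine ⟨(hφ.measurable.sub_const m).aestronglyMeasurable, ?_⟩
    rw [hasFiniteIntegral_iff_ofReal (Eventually.of_forall fun x => sub_nonneg.2 (hm x))]
    exact hφm.trans_lt ENNReal.ofReal_lt_top
  have hφi' : Integrable φ μ := by
    have h : (fun x => φ x - m) + (fun _ => m) = φ := by
      ext x
      simp
    exact h ▸ hφi.add (integrable_const m)
  refine ⟨hφi', ?_⟩
  rw [← ofReal_integral_eq_lintegral_ofReal hφi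
    (Eventually.of_forall fun x => sub_nonneg.2 (hm x)),
    ENNReal.ofReal_le_ofReal_iff (sub_nonneg.2 hmq),
    integral_sub hφi' (integrable_const m)] at hφm
  simpa using hφm

lemma exists_measure_of_positive {α : Type*} [TopologicalSpace α] [T2Space α] [CompactSpace α]
    [MeasurableSpace α] [BorelSpace α] (Λ : C(α, ℝ) →ₗ[ℝ] ℝ)
    (hpos : ∀ h : C(α, ℝ), (∀ x, 0 ≤ h x) → 0 ≤ Λ h) (hone : Λ 1 = 1) :
    ∃ μ : Measure α, IsProbabilityMeasure μ ∧ ∀ h : C(α, ℝ), ∫ x, h x ∂μ = Λ h := by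
  let L : CompactlySupportedContinuousMap α ℝ →ₗ[ℝ] ℝ :=
    { toFun := fun f => Λ f.toContinuousMap
      map_add' := fun f g => Λ.map_add f.toContinuousMap g.toContinuousMap
      map_smul' := fun c f => Λ.map_smul c f.toContinuousMap }
  let P : CompactlySupportedContinuousMap α ℝ →ₚ[ℝ] ℝ :=
    PositiveLinearMap.mk₀ L fun f hf => hpos f.toContinuousMap hf
  have hP : ∀ h : C(α, ℝ), ∫ x, h x ∂(RealRMK.rieszMeasure P) = Λ h := fun h =>
    RealRMK.integral_rieszMeasure P ⟨h, HasCompactSupport.of_compactSpace _⟩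
  refine ⟨_, ⟨?_⟩, hP⟩
  -- `μ.real univ = 1` excludes infinite mass, for which the real-valued mass would be `0`.
  have h1 := hP 1
  rw [hone] at h1
  simpa [Measure.real, ENNReal.toReal_eq_one_iff] using h1

/-- The separation step: `φ` is an arbitrary function and `q` any upper bound for the values `ψ z`
of the minorants `ψ ∈ S` of `φ`. -/
lemma exists_functional {α : Type*} [TopologicalSpace α] [CompactSpace α]
    (S : Set (α → ℝ))
    (hconst : ∀ c : ℝ, (fun _ => c) ∈ S)
    (hadd : ∀ u ∈ S, ∀ v ∈ S, u + v ∈ S)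
    (hsmul : ∀ u ∈ S, ∀ t : ℝ, 0 ≤ t → t • u ∈ S)
    (φ : α → ℝ) (z : α) (q : ℝ) (hq : ∀ ψ ∈ S, (∀ x, ψ x ≤ φ x) → ψ z ≤ q) :
    ∃ Λ : C(α, ℝ) →ₗ[ℝ] ℝ, Λ 1 = 1 ∧ (∀ h : C(α, ℝ), (∀ x, 0 ≤ h x) → 0 ≤ Λ h) ∧
      (∀ h : C(α, ℝ), (h : α → ℝ) ∈ S → h z ≤ Λ h) ∧
      ∀ f : C(α, ℝ), (∀ x, f x ≤ φ x) → Λ f ≤ q := by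
  have : Nonempty α := ⟨z⟩
  let C : PointedCone ℝ C(α, ℝ) :=
    { carrier := {h | ∃ ψ ∈ S, ∃ t : ℝ, 0 ≤ t ∧ ∀ x, ψ x - ψ z ≤ h x + t * (φ x - q)}
      add_mem' := by
        rintro h₁ h₂ ⟨ψ₁, hψ₁, t₁, ht₁, H₁⟩ ⟨ψ₂, hψ₂, t₂, ht₂, H₂⟩
        refine ⟨ψ₁ + ψ₂, hadd _ hψ₁ _ hψ₂, t₁ + t₂, add_nonneg ht₁ ht₂, fun x => ?_⟩
        have h1 := H₁ x
        have h2 := H₂ x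
        simp only [Pi.add_apply, ContinuousMap.add_apply]
        linarith
      zero_mem' := ⟨_, hconst 0, 0, le_rfl, fun x => by simp⟩
      smul_mem' := by
        rintro ⟨c, hc⟩ h ⟨ψ, hψ, t, ht, H⟩
        refine ⟨c • ψ, hsmul _ hψ c hc, c * t, mul_nonneg hc ht, fun x => ?_⟩
        have h1 := mul_le_mul_of_nonneg_left (H x) hc
        change c * ψ x - c * ψ z ≤ c * h x + c * t * (φ x - q)
        linarith }
  have hC : ∀ h : C(α, ℝ), h ∈ C ↔
      ∃ ψ ∈ S, ∃ t : ℝ, 0 ≤ t ∧ ∀ x, ψ x - ψ z ≤ h x + t * (φ x - q) := fun h => Iff.rfl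
  have hCconst : ∀ c : ℝ, c • (1 : C(α, ℝ)) ∈ C → 0 ≤ c := by
    intro c hc
    obtain ⟨ψ, hψ, t, ht, H⟩ := (hC _).1 hc
    simp only [ContinuousMap.smul_apply, ContinuousMap.one_apply, smul_eq_mul, mul_one] at H
    rcases ht.eq_or_lt with rfl | ht
    · simpa using H z
    · -- The minorant `t⁻¹ (ψ - ψ z - c) + q` of `φ` takes the value `q - t⁻¹ c` at `z`.
      have h1 := hq _ (hadd _ (hsmul _ (hadd _ hψ _ (hconst (-ψ z - c))) t⁻¹ (by positivity)) _
        (hconst q)) (fun x => by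
          have hx := H x
          have : t⁻¹ * (ψ x + (-ψ z - c)) ≤ φ x - q := by
            rw [inv_mul_le_iff₀ ht]
            linarith
          simp only [Pi.add_apply, Pi.smul_apply, smul_eq_mul]
          linarith)
      simp only [Pi.add_apply, Pi.smul_apply, smul_eq_mul] at h1
      have h2 : t⁻¹ * (ψ z + (-ψ z - c)) ≤ 0 := by linarith
      rw [inv_mul_le_iff₀ ht] at h2
      linarith
  obtain ⟨Λ, hΛ, hΛC⟩ := riesz_extension C
    (LinearPMap.mkSpanSingleton (1 : C(α, ℝ)) (1 : ℝ) one_ne_zero) (by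
      rintro ⟨x, hx⟩ hxC
      obtain ⟨c, rfl⟩ := Submodule.mem_span_singleton.1 hx
      have h := LinearPMap.mkSpanSingleton'_apply (σ := RingHom.id ℝ) (1 : C(α, ℝ)) (1 : ℝ)
        (fun c hc => by simpa using hc) c hx
      exact (hCconst c hxC).trans_eq ((by simp : c = RingHom.id ℝ c • (1 : ℝ)).trans h.symm)) (by
      intro y
      refine ⟨⟨‖y‖ • 1, Submodule.smul_mem _ _ (Submodule.mem_span_singleton_self _)⟩, ?_⟩
      refine (hC _).2 ⟨_, hconst 0, 0, le_rfl, fun x => ?_⟩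
      have := neg_le_of_abs_le (y.norm_coe_le_norm x)
      simp only [ContinuousMap.add_apply, ContinuousMap.smul_apply, ContinuousMap.one_apply,
        smul_eq_mul]
      linarith)
  have hone : Λ 1 = 1 := by
    have h := hΛ ⟨1, Submodule.mem_span_singleton_self _⟩
    rwa [LinearPMap.mkSpanSingleton_apply] at h
  refine ⟨Λ, hone, fun h hh => hΛC h ((hC h).2 ⟨_, hconst 0, 0, le_rfl, fun x => ?_⟩),
    fun h hh => ?_, fun f hf => ?_⟩
  · simpa using hh x
  · have := hΛC (h - h z • 1) ((hC _).2 ⟨h, hh, 0, le_rfl, fun x => by simp⟩)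
    rw [map_sub, map_smul, hone, smul_eq_mul] at this
    linarith
  · have := hΛC (q • 1 - f) ((hC _).2 ⟨_, hconst 0, 1, zero_le_one, fun x => by
      have := hf x
      simp only [ContinuousMap.sub_apply, ContinuousMap.smul_apply, ContinuousMap.one_apply,
        smul_eq_mul]
      linarith⟩)
    rw [map_sub, map_smul, hone, smul_eq_mul] at this
    linarith

lemma erealIntegral_coe {α : Type*} [MeasurableSpace α] (μ : Measure α) (φ : α → ℝ) :
    erealIntegral μ (fun x => ((φ x : ℝ) : EReal)) =
      ((∫⁻ x, ENNReal.ofReal (φ x) ∂μ : ℝ≥0∞) : EReal) -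
        ((∫⁻ x, ENNReal.ofReal (-φ x) ∂μ : ℝ≥0∞) : EReal) := by
  simp [erealIntegral, erealToENNReal, ← EReal.coe_neg]

lemma erealIntegral_of_integrable {α : Type*} [MeasurableSpace α] (μ : Measure α) (φ : α → ℝ)
    (hφ : Integrable φ μ) :
    erealIntegral μ (fun x => ((φ x : ℝ) : EReal)) = ((∫ x, φ x ∂μ : ℝ) : EReal) := by
  have h1 : ∫⁻ x, ENNReal.ofReal (φ x) ∂μ ≠ ⊤ := hφ.lintegral_lt_top.ne
  have h2 : ∫⁻ x, ENNReal.ofReal (-φ x) ∂μ ≠ ⊤ := hφ.neg.lintegral_lt_top.ne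
  rw [erealIntegral_coe, integral_eq_lintegral_pos_part_sub_lintegral_neg_part hφ,
    EReal.coe_sub, EReal.coe_ennreal_toReal h1, EReal.coe_ennreal_toReal h2]

lemma le_erealIntegral {α : Type*} [MeasurableSpace α] (μ : Measure α)
    (φ ψ : α → ℝ) (hφ : Measurable φ) (hψ : Integrable ψ μ) (hle : ∀ x, ψ x ≤ φ x) :
    ((∫ x, ψ x ∂μ : ℝ) : EReal) ≤ erealIntegral μ (fun x => ((φ x : ℝ) : EReal)) := by
  by_cases hφi : Integrable φ μ
  · rw [erealIntegral_of_integrable μ φ hφi]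
    exact_mod_cast integral_mono hψ hφi hle
  · -- The negative part of `φ` is dominated by that of `ψ`, so the positive part has infinite
    -- integral.
    have hneg : ∫⁻ x, ENNReal.ofReal (-φ x) ∂μ < ⊤ :=
      (lintegral_mono fun x => ENNReal.ofReal_le_ofReal (neg_le_neg (hle x))).trans_lt
        hψ.neg.lintegral_lt_top
    have hpos : ∫⁻ x, ENNReal.ofReal (φ x) ∂μ = ⊤ := by
      by_contra hne
      refine hφi ⟨hφ.aestronglyMeasurable, ?_⟩
      rw [hasFiniteIntegral_iff_norm]
      have hsum : ∀ x, ENNReal.ofReal ‖φ x‖ ≤ ENNReal.ofReal (φ x) + ENNReal.ofReal (-φ x) := by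
        intro x
        rcases le_total 0 (φ x) with h | h
        · rw [Real.norm_of_nonneg h]
          exact le_self_add
        · rw [Real.norm_of_nonpos h]
          exact le_add_self
      refine (lintegral_mono hsum).trans_lt ?_
      rw [lintegral_add_left hφ.ennreal_ofReal]
      exact ENNReal.add_lt_top.2 ⟨lt_top_iff_ne_top.2 hne, hneg⟩
    rw [erealIntegral_coe, hpos, EReal.coe_ennreal_top, EReal.top_sub]
    · exact le_top
    · simpa using hneg.ne

/-- Edwards' duality theorem: for a lower semicontinuous `φ : X → ℝ` and `z ∈ X`,
`sup { ψ z : ψ ∈ S, ψ ≤ φ } = inf { ∫ φ dμ : μ ∈ J_z(S) }`. -/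
theorem edwards_duality {n : ℕ}
    (X : Set (Fin n → ℂ)) (hX : IsCompact X)
    (S : Set (↥X → ℝ)) (hS : ∀ f ∈ S, Continuous f)
    (hconst : ∀ c : ℝ, (fun _ => c) ∈ S)
    (hadd : ∀ u ∈ S, ∀ v ∈ S, u + v ∈ S)
    (hsmul : ∀ u ∈ S, ∀ t : ℝ, 0 ≤ t → t • u ∈ S)
    (hmax : ∀ u ∈ S, ∀ v ∈ S, (fun x => max (u x) (v x)) ∈ S)
    (φ : ↥X → ℝ) (hφ : LowerSemicontinuous φ) (z : ↥X) :
    sSup {y : EReal | ∃ ψ ∈ S, (∀ x, ψ x ≤ φ x) ∧ y = ((ψ z : ℝ) : EReal)} =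
      sInf {y : EReal | ∃ μ : Measure ↥X, IsJensenMeasure S z μ ∧
        y = erealIntegral μ (fun x => ((φ x : ℝ) : EReal))} := by
  have : CompactSpace ↥X := isCompact_iff_compactSpace.1 hX
  have : Nonempty ↥X := ⟨z⟩
  apply le_antisymm
  · refine sSup_le ?_
    rintro _ ⟨ψ, hψS, hψ, rfl⟩
    refine le_sInf ?_
    rintro _ ⟨μ, ⟨hμ, hJ⟩, rfl⟩
    have hψi : Integrable ψ μ :=
      (hS ψ hψS).integrable_of_hasCompactSupport (HasCompactSupport.of_compactSpace _)
    refine le_trans ?_ (le_erealIntegral μ φ ψ hφ.measurable hψi hψ)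
    exact_mod_cast hJ ψ hψS
  · obtain ⟨a, -, ha⟩ := (hφ.lowerSemicontinuousOn Set.univ).exists_isMinOn
      Set.univ_nonempty isCompact_univ
    have hm : ∀ x, φ a ≤ φ x := fun x => ha (Set.mem_univ x)
    set T : Set ℝ := {y | ∃ ψ ∈ S, (∀ x, ψ x ≤ φ x) ∧ y = ψ z} with hT
    have hTne : T.Nonempty := ⟨φ a, _, hconst (φ a), hm, rfl⟩
    have hTbdd : BddAbove T := by
      refine ⟨φ z, ?_⟩
      rintro _ ⟨ψ, -, hψ, rfl⟩
      exact hψ z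
    obtain ⟨Λ, hone, hpos, hJ, hle⟩ := exists_functional S hconst hadd hsmul φ z (sSup T)
      fun ψ hψS hψ => le_csSup hTbdd ⟨ψ, hψS, hψ, rfl⟩
    obtain ⟨μ, hμ, hμΛ⟩ := exists_measure_of_positive Λ hpos hone
    obtain ⟨hφi, hφq⟩ := integral_le_of_continuous_le μ φ hφ (φ a) hm (sSup T)
      fun f hf => (hμΛ f).trans_le (hle f hf)
    have hJensen : IsJensenMeasure S z μ := by
      refine ⟨hμ, fun u hu => ?_⟩
      exact (hJ ⟨u, hS u hu⟩ hu).trans_eq (hμΛ ⟨u, hS u hu⟩).symm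
    refine sInf_le_of_le ⟨μ, hJensen, rfl⟩ ?_
    rw [erealIntegral_of_integrable μ φ hφi]
    refine (EReal.coe_le_coe_iff.2 hφq).trans (le_of_forall_lt fun c hc => ?_)
    -- The supremum over `T` in `ℝ` agrees with the one in `EReal` by approximation from below.
    induction c with
    | bot => exact (EReal.bot_lt_coe (φ a)).trans_le (le_sSup ⟨_, hconst (φ a), hm, rfl⟩)
    | top => exact absurd hc (by simp)
    | coe c =>
      obtain ⟨_, ⟨ψ, hψS, hψ, rfl⟩, hlt⟩ := exists_lt_of_lt_csSup hTne (EReal.coe_lt_coe_iff.1 hc)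
      exact (EReal.coe_lt_coe_iff.2 hlt).trans_le (le_sSup ⟨ψ, hψS, hψ, rfl⟩)
end

section
/- Suppose there exists a function ψ : Ω̄ → [-∞, ∞) that is S-subharmonic on Ω̄, satisfies ψ ≤ 0 on Ω̄ and ψ < 0 on Ω, and is an exhaustion for Ω in the sense that for every c < 0 the sublevel set {x ∈ Ω̄ : ψ(x) < c} is relatively compact in Ω. Then for every z ∈ ∂Ω and every μ ∈ J_z(S) one has μ(Ω) = 0, i.e., μ is supported on ∂Ω. -/
/-!
At a boundary point `z` the exhaustion property forces `ψ z = 0`: otherwise `z` would lie in a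
sublevel set `{ψ < c}` with `c < 0`, hence in the open set `Ω`, which is disjoint from `∂Ω`.
The Jensen inequality for `ψ` at `z` then reads `0 ≤ ∫ ψ dμ`. Since `ψ ≤ 0`, the integral of the
negative part of `ψ` vanishes, so `ψ = 0` almost everywhere for `μ`. As `ψ < 0` on `Ω`, the set `Ω`
is `μ`-null.
-/

open MeasureTheory Topology Filter
open scoped ENNReal

theorem erealToENNReal_eq_toENNReal (a : EReal) : erealToENNReal a = a.toENNReal := rfl

/-- If the bounded domain `Ω` admits a negative `S`-subharmonic exhaustion function
on `Ω̄`, then every Jensen measure with barycenter on `∂Ω` is supported on `∂Ω`. -/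
theorem jensen_measure_supported_on_boundary_of_exhaustion {n : ℕ}
    (Ω : Set (Fin n → ℂ)) (hΩo : IsOpen Ω) (hΩc : IsConnected Ω)
    (hΩb : Bornology.IsBounded Ω)
    (S : Set (↥(closure Ω) → ℝ)) (hS : ∀ f ∈ S, Continuous f)
    (ψ : ↥(closure Ω) → EReal) (hψ : IsSSubharmonic S ψ)
    (hψ0 : ∀ x, ψ x ≤ 0)
    (hψneg : ∀ x : ↥(closure Ω), (x : Fin n → ℂ) ∈ Ω → ψ x < 0)
    (hexh : ∀ c : ℝ, c < 0 →
      IsCompact (closure {x : Fin n → ℂ | ∃ hx : x ∈ closure Ω, ψ ⟨x, hx⟩ < (c : EReal)}) ∧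
      closure {x : Fin n → ℂ | ∃ hx : x ∈ closure Ω, ψ ⟨x, hx⟩ < (c : EReal)} ⊆ Ω) :
    ∀ z : ↥(closure Ω), (z : Fin n → ℂ) ∈ frontier Ω →
      ∀ μ : Measure ↥(closure Ω), IsJensenMeasure S z μ →
        μ {x : ↥(closure Ω) | (x : Fin n → ℂ) ∈ Ω} = 0 := by
  intro z hz μ hμ
  have hψz : ψ z = 0 := by
    refine le_antisymm (hψ0 z) (not_lt.1 fun hlt => ?_)
    obtain ⟨c, hzc, hc⟩ := EReal.lt_iff_exists_real_btwn.1 hlt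
    have hzΩ : (z : Fin n → ℂ) ∈ Ω :=
      (hexh c (by exact_mod_cast hc)).2 (subset_closure ⟨z.2, hzc⟩)
    rw [hΩo.frontier_eq] at hz
    exact hz.2 hzΩ
  have hle := hψ.2.2 z μ hμ
  simp only [erealIntegral, erealToENNReal_eq_toENNReal, hψz,
    EReal.toENNReal_of_nonpos (hψ0 _), lintegral_zero, EReal.coe_ennreal_zero, zero_sub] at hle
  have hint : ∫⁻ x, (-ψ x).toENNReal ∂μ = 0 := by
    have h : ((∫⁻ x, (-ψ x).toENNReal ∂μ : ℝ≥0∞) : EReal) ≤ 0 := by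
      simpa using EReal.neg_le_neg_iff.2 hle
    exact_mod_cast le_antisymm h (EReal.coe_ennreal_nonneg _)
  have hmeas : Measurable fun x => (-ψ x).toENNReal :=
    hψ.1.measurable.neg.ereal_toENNReal
  rw [lintegral_eq_zero_iff hmeas] at hint
  refine measure_mono_null ?_ (ae_iff.1 hint)
  intro x hx h0
  have h1 : -ψ x ≤ 0 := EReal.toENNReal_eq_zero_iff.1 h0
  exact absurd (hψneg x hx) (not_lt.2 (by simpa using EReal.neg_le_neg_iff.2 h1))
end

section
/- Let z₀ ∈ ∂Ω and suppose there exists a function u : Ω̄ → [-∞, ∞) that is S-subharmonic on Ω̄ with u ≤ 0 on Ω̄, u < 0 on Ω, and u(z₀) = 0 (a weak barrier at z₀). Then every μ ∈ J_{z₀}(S) satisfies μ(Ω) = 0, i.e., μ is supported on ∂Ω. -/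
/-!
Since `u ≤ 0` the positive part of `u` contributes nothing to `erealIntegral μ u`, so the
Jensen inequality `0 = u z₀ ≤ ∫ u dμ` forces the lower integral of the negative part of `u` to
vanish. Upper semicontinuity makes `u` Borel, hence `u = 0` almost everywhere for `μ`, while
`u < 0` at every point of `Ω`.
-/

open MeasureTheory Topology Filter
open scoped ENNReal

/-- If `∂Ω` has a weak barrier at `z₀` that is `S`-subharmonic on `Ω̄`, then every
Jensen measure with barycenter `z₀` is supported on `∂Ω`. -/
theorem jensen_measure_supported_on_boundary_of_weak_barrier {n : ℕ}
    (Ω : Set (Fin n → ℂ)) (hΩo : IsOpen Ω) (hΩc : IsConnected Ω)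
    (hΩb : Bornology.IsBounded Ω)
    (S : Set (↥(closure Ω) → ℝ)) (hS : ∀ f ∈ S, Continuous f)
    (z₀ : ↥(closure Ω)) (hz₀ : (z₀ : Fin n → ℂ) ∈ frontier Ω)
    (u : ↥(closure Ω) → EReal) (hu : IsSSubharmonic S u)
    (hu0 : ∀ x, u x ≤ 0)
    (huneg : ∀ x : ↥(closure Ω), (x : Fin n → ℂ) ∈ Ω → u x < 0)
    (huz₀ : u z₀ = 0) :
    ∀ μ : Measure ↥(closure Ω), IsJensenMeasure S z₀ μ →
      μ {x : ↥(closure Ω) | (x : Fin n → ℂ) ∈ Ω} = 0 := by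
  intro μ hμ
  have hJ := hu.2.2 z₀ μ hμ
  have hmeas : Measurable u := hu.1.measurable
  simp only [huz₀, erealIntegral, erealToENNReal_eq_toENNReal] at hJ
  have hpos : ∀ x, (u x).toENNReal = 0 := fun x => EReal.toENNReal_of_nonpos (hu0 x)
  simp only [hpos, lintegral_zero, EReal.coe_ennreal_zero, zero_sub] at hJ
  have hint : ∫⁻ x, (-(u x)).toENNReal ∂μ = 0 := by
    have h := EReal.neg_le_neg_iff.mpr hJ
    rw [neg_neg, neg_zero] at h
    exact_mod_cast le_antisymm h (EReal.coe_ennreal_nonneg _)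
  have hae := (lintegral_eq_zero_iff hmeas.neg.ereal_toENNReal).mp hint
  refine measure_mono_null (fun x hx => ?_) (ae_iff.mp hae)
  have hx' : 0 < -(u x) := by
    rw [EReal.lt_neg_comm, neg_zero]
    exact huneg x hx
  simpa [EReal.toENNReal_eq_zero_iff] using hx'
end
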